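/- In the algebra ℚ[Y_∞] of planar binary trees, for all trees t ∈ Y_p and w ∈ Y_q the product satisfies t * w = Σ u, the sum over all trees u ∈ Y_{p+q} with t/w ≤ u ≤ t\w in the weak order on Y_{p+q}. -/

import Mathlib

/-- Planar binary trees: `leaf` is the tree `|` (no interior vertex) and
`node l r = l ∨ r` is the grafting of `l` and `r` (their roots are joined to a new
vertex, which becomes the root). -/
inductive PBTree : Type
  | leaf : PBTree
  | node : PBTree → PBTree → PBTree
deriving DecidableEq

/-- The number of interior vertices of a planar binary tree: `t ∈ Yₙ` iff `t.size = n`. -/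
def PBTree.size : PBTree → ℕ
  | .leaf => 0
  | .node l r => l.size + r.size + 1

/-- The weak order on planar binary trees, generated transitively by
(a) `u ≤ u' → v ≤ v' → u∨v ≤ u'∨v'` and (b) `(u∨v)∨w ≤ u∨(v∨w)`. -/
inductive TreeLe : PBTree → PBTree → Prop
  | refl (t : PBTree) : TreeLe t t
  | graft {u u' v v' : PBTree} : TreeLe u u' → TreeLe v v' →
      TreeLe (.node u v) (.node u' v')
  | rotate (u v w : PBTree) : TreeLe (.node (.node u v) w) (.node u (.node v w))
  | trans {a b c : PBTree} : TreeLe a b → TreeLe b c → TreeLe a c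

/-- The `over` operation on trees: `u / v` is obtained by identifying the root of `u`
with the leftmost leaf of `v`; recursively `u / | = u` and `u / (vˡ∨vʳ) = (u/vˡ) ∨ vʳ`. -/
def treeOver : PBTree → PBTree → PBTree
  | u, .leaf => u
  | u, .node vl vr => .node (treeOver u vl) vr

/-- The `under` operation on trees: `u \ v` is obtained by identifying the rightmost leaf
of `u` with the root of `v`; recursively `| \ v = v` and `(uˡ∨uʳ) \ v = uˡ ∨ (uʳ\v)`. -/
def treeUnder : PBTree → PBTree → PBTree
  | .leaf, v => v
  | .node ul ur, v => .node ul (treeUnder ur v)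

attribute [local instance] Classical.propDecidable

/-- Bilinear extension of grafting in the left slot: `a ∨ r`. -/
noncomputable def graftL (a : PBTree →₀ ℚ) (r : PBTree) : PBTree →₀ ℚ :=
  Finsupp.mapDomain (fun t => PBTree.node t r) a

/-- Bilinear extension of grafting in the right slot: `l ∨ a`. -/
noncomputable def graftR (l : PBTree) (a : PBTree →₀ ℚ) : PBTree →₀ ℚ :=
  Finsupp.mapDomain (fun t => PBTree.node l t) a

/-- The associative product `*` of the algebra `ℚ[Y_∞] = ⊕_{n≥0} ℚ[Yₙ]` (whose basis is
the set of all planar binary trees, graded by size) on basis elements: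
`t * | = | * t = t` and `t * w = (t * wˡ) ∨ wʳ + tˡ ∨ (tʳ * w)` for `t = tˡ∨tʳ`,
`w = wˡ∨wʳ`. -/
noncomputable def treeMul : PBTree → PBTree → (PBTree →₀ ℚ)
  | .leaf, w => Finsupp.single w 1
  | t, .leaf => Finsupp.single t 1
  | .node tl tr, .node wl wr =>
      graftL (treeMul (.node tl tr) wl) wr + graftR tl (treeMul tr (.node wl wr))
termination_by t w => t.size + w.size
decreasing_by
  all_goals simp only [PBTree.size] <;> omega

open PBTree

theorem leaf_over (t : PBTree) : treeOver leaf t = t := by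
  induction t with
  | leaf => rfl
  | node l r ihl _ => simp [treeOver, ihl]

theorem under_leaf (t : PBTree) : treeUnder t leaf = t := by
  induction t with
  | leaf => rfl
  | node l r _ ihr => simp [treeUnder, ihr]

theorem size_over (t w : PBTree) : (treeOver t w).size = t.size + w.size := by
  induction w with
  | leaf => simp [treeOver, size]
  | node l r ihl _ => simp [treeOver, size, ihl]; omega

theorem size_under (t w : PBTree) : (treeUnder t w).size = t.size + w.size := by
  induction t with
  | leaf => simp [treeUnder, size]
  | node l r _ ihr => simp [treeUnder, size, ihr]; omega

theorem TreeLe.size_eq {a b : PBTree} (h : TreeLe a b) : a.size = b.size := by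
  induction h with
  | refl => rfl
  | graft _ _ h1 h2 => simp [size, h1, h2]
  | rotate u v w => simp [size]; omega
  | trans _ _ h1 h2 => exact h1.trans h2

theorem TreeLe.left_dec {a b : PBTree} (h : TreeLe a b) :
    ∀ c x y, b = treeOver (node c x) y → ∃ c' x' y', a = treeOver (node c' x') y' ∧
      TreeLe c' c ∧ TreeLe (treeOver x' y') (treeOver x y) := by
  induction h with
  | refl t => intro c x y h; exact ⟨c, x, y, h, .refl _, .refl _⟩
  | @graft u u' v v' h1 h2 ih1 ih2 =>
    intro c x y h
    cases y with
    | leaf =>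
      simp only [treeOver, node.injEq] at h
      obtain ⟨rfl, rfl⟩ := h
      exact ⟨u, v, leaf, rfl, h1, h2⟩
    | node y1 y2 =>
      simp only [treeOver, node.injEq] at h
      obtain ⟨h, rfl⟩ := h
      obtain ⟨c', x', y', rfl, h3, h4⟩ := ih1 _ _ _ h
      exact ⟨c', x', node y' v, rfl, h3, .graft h4 h2⟩
  | rotate u v w =>
    intro c x y h
    cases y with
    | leaf =>
      simp only [treeOver, node.injEq] at h
      obtain ⟨rfl, rfl⟩ := h
      exact ⟨u, v, node leaf w, rfl, .refl _, .refl _⟩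
    | node y1 y2 =>
      simp only [treeOver, node.injEq] at h
      obtain ⟨rfl, rfl⟩ := h
      exact ⟨c, x, node (node y1 v) w, rfl, .refl _, .rotate _ _ _⟩
  | trans _ _ ih1 ih2 =>
    intro c x y h
    obtain ⟨c', x', y', h1, h2, h3⟩ := ih2 _ _ _ h
    obtain ⟨c'', x'', y'', h4, h5, h6⟩ := ih1 _ _ _ h1
    exact ⟨c'', x'', y'', h4, h5.trans h2, h6.trans h3⟩

theorem TreeLe.right_dec {a b : PBTree} (h : TreeLe a b) :
    ∀ c x y, a = treeUnder y (node x c) → ∃ c' x' y', b = treeUnder y' (node x' c') ∧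
      TreeLe c c' ∧ TreeLe (treeUnder y x) (treeUnder y' x') := by
  induction h with
  | refl t => intro c x y h; exact ⟨c, x, y, h, .refl _, .refl _⟩
  | @graft u u' v v' h1 h2 ih1 ih2 =>
    intro c x y h
    cases y with
    | leaf =>
      simp only [treeUnder, node.injEq] at h
      obtain ⟨rfl, rfl⟩ := h
      exact ⟨v', u', leaf, rfl, h2, h1⟩
    | node y1 y2 =>
      simp only [treeUnder, node.injEq] at h
      obtain ⟨rfl, h⟩ := h
      obtain ⟨c', x', y', rfl, h3, h4⟩ := ih2 _ _ _ h
      exact ⟨c', x', node u' y', rfl, h3, .graft h1 h4⟩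
  | rotate u v w =>
    intro c x y h
    cases y with
    | leaf =>
      simp only [treeUnder, node.injEq] at h
      obtain ⟨rfl, rfl⟩ := h
      exact ⟨w, v, node u leaf, rfl, .refl _, .refl _⟩
    | node y1 y2 =>
      simp only [treeUnder, node.injEq] at h
      obtain ⟨rfl, rfl⟩ := h
      exact ⟨c, x, node u (node v y2), rfl, .refl _, .rotate _ _ _⟩
  | trans _ _ ih1 ih2 =>
    intro c x y h
    obtain ⟨c', x', y', h1, h2, h3⟩ := ih1 _ _ _ h
    obtain ⟨c'', x'', y'', h4, h5, h6⟩ := ih2 _ _ _ h1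
    exact ⟨c'', x'', y'', h4, h2.trans h5, h3.trans h6⟩

theorem over_cancel (a b c d : PBTree) : ∀ y z, treeOver (node a b) y = treeOver (node c d) z →
    (a = c ∧ b = d ∧ y = z) ∨ c.size < a.size ∨ a.size + b.size + 1 ≤ c.size := by
  intro y
  induction y with
  | leaf =>
    intro z h
    cases z with
    | leaf => simp only [treeOver, node.injEq] at h; exact .inl ⟨h.1, h.2, rfl⟩
    | node z1 z2 =>
      simp only [treeOver, node.injEq] at h
      have := congrArg size h.1
      simp only [size_over, size] at this
      omega
  | node y1 y2 ih _ =>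
    intro z h
    cases z with
    | leaf =>
      simp only [treeOver, node.injEq] at h
      have := congrArg size h.1
      simp only [size_over, size] at this
      omega
    | node z1 z2 =>
      simp only [treeOver, node.injEq] at h
      rcases ih _ h.1 with h' | h'
      · left; simp [h', h.2]
      · exact .inr h'

theorem under_cancel (a b c d : PBTree) : ∀ y z, treeUnder y (node b a) = treeUnder z (node d c) →
    (a = c ∧ b = d ∧ y = z) ∨ c.size < a.size ∨ a.size + b.size + 1 ≤ c.size := by
  intro y
  induction y with
  | leaf =>
    intro z h
    cases z with
    | leaf => simp only [treeUnder, node.injEq] at h; exact .inl ⟨h.2, h.1, rfl⟩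
    | node z1 z2 =>
      simp only [treeUnder, node.injEq] at h
      have := congrArg size h.2
      simp only [size_under, size] at this
      omega
  | node y1 y2 _ ih =>
    intro z h
    cases z with
    | leaf =>
      simp only [treeUnder, node.injEq] at h
      have := congrArg size h.2
      simp only [size_under, size] at this
      omega
    | node z1 z2 =>
      simp only [treeUnder, node.injEq] at h
      rcases ih _ h.2 with h' | h'
      · left; simp [h', h.1]
      · exact .inr h'

/-- trichotomy on the left spine -/
theorem left_tri {a b y c d : PBTree} (h : TreeLe (treeOver (node a b) y) (node c d)) :
    (a.size = c.size ∧ TreeLe a c ∧ TreeLe (treeOver b y) d) ∨ c.size < a.size ∨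
      a.size + b.size + 1 ≤ c.size := by
  obtain ⟨c', x', y', h1, h2, h3⟩ := h.left_dec c d leaf rfl
  have hs := h2.size_eq
  rcases over_cancel _ _ _ _ _ _ h1 with ⟨rfl, rfl, rfl⟩ | h'
  · exact .inl ⟨hs, h2, h3⟩
  · right; omega

theorem right_tri {a b y c d : PBTree} (h : TreeLe (node d c) (treeUnder y (node b a))) :
    (a.size = c.size ∧ TreeLe c a ∧ TreeLe d (treeUnder y b)) ∨ c.size < a.size ∨
      a.size + b.size + 1 ≤ c.size := by
  obtain ⟨c', x', y', h1, h2, h3⟩ := h.right_dec c d leaf rfl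
  have hs := h2.size_eq
  rcases under_cancel _ _ _ _ _ _ h1 with ⟨rfl, rfl, rfl⟩ | h'
  · exact .inl ⟨hs.symm, h2, h3⟩
  · right; omega

theorem TreeLe.left_size {a b c d : PBTree} (h : TreeLe (node a b) (node c d)) :
    c.size ≤ a.size := by
  have := h.size_eq
  simp only [size] at this
  rcases left_tri (y := leaf) h with h | h | h <;> omega

theorem TreeLe.antisymm' : ∀ {a b : PBTree}, TreeLe a b → TreeLe b a → a = b := by
  intro a
  induction a with
  | leaf =>
    intro b h _
    cases b with
    | leaf => rfl
    | node l r => have := h.size_eq; simp [size] at this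
  | node l r ihl ihr =>
    intro b h h'
    cases b with
    | leaf => have := h.size_eq; simp [size] at this
    | node l' r' =>
      have h1 := h.left_size
      have h2 := h'.left_size
      have h3 := h.size_eq
      simp only [size] at h3
      rcases left_tri (y := leaf) h with g | g | g
      · rcases left_tri (y := leaf) h' with g' | g' | g'
        · rw [ihl g.2.1 g'.2.1, ihr g.2.2 g'.2.2]
        · omega
        · omega
      · omega
      · omega

theorem under_graft (t a b : PBTree) : TreeLe (node (treeUnder t a) b) (treeUnder t (node a b)) := by
  induction t with
  | leaf => exact .refl _
  | node l r _ ih => exact (TreeLe.rotate _ _ _).trans (.graft (.refl _) ih)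

theorem over_graft (w a b : PBTree) : TreeLe (treeOver (node a b) w) (node a (treeOver b w)) := by
  induction w with
  | leaf => exact .refl _
  | node l r ih _ => exact (TreeLe.graft ih (.refl _)).trans (.rotate _ _ _)

theorem interval_iff (tl tr wl wr ul ur : PBTree) :
    (TreeLe (treeOver (node tl tr) (node wl wr)) (node ul ur) ∧
      TreeLe (node ul ur) (treeUnder (node tl tr) (node wl wr))) ↔
    (ur = wr ∧ TreeLe (treeOver (node tl tr) wl) ul ∧ TreeLe ul (treeUnder (node tl tr) wl)) ∨
    (ul = tl ∧ TreeLe (treeOver tr (node wl wr)) ur ∧ TreeLe ur (treeUnder tr (node wl wr))) := by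
  constructor
  · rintro ⟨h1, h2⟩
    have hs := h1.size_eq
    simp only [size_over, size] at hs
    have k1 := left_tri h1
    have k2 := right_tri h2
    have k3 := left_tri (y := leaf) (a := ul) (b := ur) h2
    have k5 := TreeLe.left_size h1
    have k6 := TreeLe.left_size h2
    simp only [size_over, size] at k5
    by_cases e : ul.size = tl.size
    · right
      rcases k1 with k1 | k1 | k1
      · rcases k3 with k3 | k3 | k3
        · exact ⟨k3.2.1.antisymm' k1.2.1, k1.2.2, k3.2.2⟩
        · omega
        · omega
      · omega
      · omega
    · left
      have k7 := right_tri (y := leaf) (b := ul) (a := ur) h1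
      rcases k2 with k2 | k2 | k2
      · rcases k7 with k7 | k7 | k7
        · exact ⟨k2.2.1.antisymm' k7.2.1, k7.2.2, k2.2.2⟩
        · omega
        · omega
      · omega
      · omega
  · rintro (⟨rfl, h1, h2⟩ | ⟨rfl, h1, h2⟩)
    · exact ⟨.graft h1 (.refl _), (TreeLe.graft h2 (.refl _)).trans (under_graft _ _ _)⟩
    · exact ⟨(over_graft _ _ _).trans (.graft (.refl _) h1), .graft (.refl _) h2⟩

theorem graftL_node (a : PBTree →₀ ℚ) (r ul ur : PBTree) :
    graftL a r (node ul ur) = if ur = r then a ul else 0 := by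
  unfold graftL
  split_ifs with h
  · subst h
    exact Finsupp.mapDomain_apply (fun x y h => (node.inj h).1) a ul
  · apply Finsupp.mapDomain_of_notMem_range
    rintro ⟨x, hx⟩
    exact h (node.inj hx).2.symm

theorem graftR_node (a : PBTree →₀ ℚ) (l ul ur : PBTree) :
    graftR l a (node ul ur) = if ul = l then a ur else 0 := by
  unfold graftR
  split_ifs with h
  · subst h
    exact Finsupp.mapDomain_apply (fun x y h => (node.inj h).2) a ur
  · apply Finsupp.mapDomain_of_notMem_range
    rintro ⟨x, hx⟩
    exact h (node.inj hx).1.symm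

theorem graft_leaf (a b : PBTree →₀ ℚ) (r l : PBTree) :
    (graftL a r + graftR l b) leaf = 0 := by
  unfold graftL graftR
  rw [Finsupp.add_apply, Finsupp.mapDomain_of_notMem_range, Finsupp.mapDomain_of_notMem_range, add_zero]
  · rintro ⟨x, hx⟩; cases hx
  · rintro ⟨x, hx⟩; cases hx

theorem single_le (t u : PBTree) :
    (Finsupp.single t (1 : ℚ)) u = if TreeLe t u ∧ TreeLe u t then 1 else 0 := by
  rw [Finsupp.single_apply]
  by_cases h : t = u
  · subst h; simp [TreeLe.refl]
  · rw [if_neg h, if_neg]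
    rintro ⟨h1, h2⟩
    exact h (h1.antisymm' h2)

theorem mul_aux : ∀ (n : ℕ) (t w u : PBTree), t.size + w.size = n → (treeMul t w) u =
      if TreeLe (treeOver t w) u ∧ TreeLe u (treeUnder t w) then 1 else 0 := by
  intro n
  induction n using Nat.strong_induction_on with
  | _ n ih =>
  intro t w u hn
  cases t with
  | leaf => rw [leaf_over, treeMul]; exact single_le w u
  | node tl tr =>
  cases w with
  | leaf =>
    rw [under_leaf, treeMul]
    · exact single_le _ u
    · simp
  | node wl wr =>
  rw [treeMul]
  cases u with
  | leaf =>
    rw [graft_leaf, if_neg]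
    rintro ⟨h, _⟩
    have := h.size_eq
    simp [treeOver, size] at this
  | node ul ur =>
  simp only [size] at hn
  rw [Finsupp.add_apply, graftL_node, graftR_node,
    ih _ (by simp only [size]; omega) (node tl tr) wl ul rfl,
    ih _ (by simp only [size]; omega) tr (node wl wr) ur rfl]
  simp only [interval_iff]
  by_cases h1 : ur = wr ∧ TreeLe (treeOver (node tl tr) wl) ul ∧ TreeLe ul (treeUnder (node tl tr) wl)
  · have hne : ul ≠ tl := by
      rintro rfl
      have := h1.2.1.size_eq
      simp only [size_over, size] at this
      omega
    rw [if_pos h1.1, if_pos h1.2, if_neg hne, if_pos (.inl h1), add_zero]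
  · by_cases h2 : ul = tl ∧ TreeLe (treeOver tr (node wl wr)) ur ∧ TreeLe ur (treeUnder tr (node wl wr))
    · rw [← ite_and, if_neg h1, if_pos h2.1, if_pos h2.2, if_pos (Or.inr h2), zero_add]
    · rw [← ite_and, ← ite_and, if_neg h1, if_neg h2, if_neg (by tauto), add_zero]

/-- Theorem 5.1: in `ℚ[Y_∞]`, for all trees `t` and `w` the product
satisfies `t * w = Σ u`, the sum over all trees `u` with `t/w ≤ u ≤ t\w` in the weak
order (stated coefficientwise: the coefficient of any tree `u` in `t * w` is `1` if
`t/w ≤ u ≤ t\w` and `0` otherwise). -/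
theorem stmt15 (t w u : PBTree) :
    (treeMul t w) u =
      if TreeLe (treeOver t w) u ∧ TreeLe u (treeUnder t w) then 1 else 0 := by
  exact mul_aux _ t w u rfl
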